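/- Let u, v be unit vectors in ℝ² with angle ϑ = ∠(u,v) ∈ (0, π), let O ∈ ℝ², and let W = {O + s·u + t·v : s, t ≥ 0}. Then for every point X ∈ ℝ², sup{∠(A − X, B − X) : A, B ∈ W, A ≠ X, B ≠ X} ≥ ϑ. Consequently, for any α < ϑ the set of points whose aperture angle with respect to W equals α is empty. -/

import Mathlib

open Real InnerProductGeometry

/-!
Seen from `X`, the points `O + r • u` and `O + r • v` lie in the directions `O - X + r • u` and
`O - X + r • v`. After division by `r` these converge to `u` and `v` as `r → ∞`, so by continuity
the angles at `X` converge to the angle of the wedge. That angle is therefore a limit of elements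
of the set whose supremum is the aperture angle; the supremum itself need not be attained.
-/

open Filter Topology

section Asymptotics

variable {E : Type*} [AddCommGroup E] [Module ℝ E] [TopologicalSpace E] [ContinuousAdd E]
  [ContinuousSMul ℝ E]

lemma tendsto_inv_smul_add_smul (w u : E) :
    Tendsto (fun r : ℝ => r⁻¹ • (w + r • u)) atTop (𝓝 u) := by
  have hlim : Tendsto (fun r : ℝ => r⁻¹ • w + u) atTop (𝓝 u) := by
    simpa using ((tendsto_inv_atTop_zero (𝕜 := ℝ)).smul_const w).add_const u
  refine hlim.congr' ?_
  filter_upwards [eventually_ne_atTop 0] with r hr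
  rw [smul_add, inv_smul_smul₀ hr]

lemma eventually_add_smul_ne_zero [T1Space E] {u : E} (hu : u ≠ 0) (w : E) :
    ∀ᶠ r : ℝ in atTop, w + r • u ≠ 0 :=
  ((tendsto_inv_smul_add_smul w u).eventually_ne hu).mono fun _ => right_ne_zero_of_smul

end Asymptotics

section ApertureAngle

variable {E : Type*} [NormedAddCommGroup E] [InnerProductSpace ℝ E] {u v : E}

lemma tendsto_angle_add_smul_add_smul (hu : u ≠ 0) (hv : v ≠ 0) (w z : E) :
    Tendsto (fun r : ℝ => angle (w + r • u) (z + r • v)) atTop (𝓝 (angle u v)) := by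
  have hdir : Tendsto (fun r : ℝ => (r⁻¹ • (w + r • u), r⁻¹ • (z + r • v))) atTop (𝓝 (u, v)) :=
    (tendsto_inv_smul_add_smul w u).prodMk_nhds (tendsto_inv_smul_add_smul z v)
  have hangle : ContinuousAt (fun p : E × E => angle p.1 p.2) (u, v) := continuousAt_angle hu hv
  refine (hangle.tendsto.comp hdir).congr' ?_
  filter_upwards [eventually_ne_atTop 0] with r hr
  exact angle_smul_smul (inv_ne_zero hr) _ _

/-- The aperture (visibility) angle of `X` with respect to `Q`. The point `X` may lie in `Q`; if
`Q ⊆ {X}`, the supremum is over the empty set and the value is `0`. -/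
noncomputable def apertureAngle (Q : Set E) (X : E) : ℝ :=
  sSup {θ : ℝ | ∃ A ∈ Q, ∃ B ∈ Q, A ≠ X ∧ B ≠ X ∧ θ = angle (A - X) (B - X)}

lemma angle_le_apertureAngle {Q : Set E} {A B X : E} (hA : A ∈ Q) (hB : B ∈ Q) (hAX : A ≠ X)
    (hBX : B ≠ X) : angle (A - X) (B - X) ≤ apertureAngle Q X := by
  refine le_csSup ⟨π, ?_⟩ ⟨A, hA, B, hB, hAX, hBX, rfl⟩
  rintro _ ⟨_, -, _, -, -, -, rfl⟩
  exact angle_le_pi _ _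

lemma angle_le_apertureAngle_of_eventually_mem {Q : Set E} {O P : E} (hu : u ≠ 0) (hv : v ≠ 0)
    (hOu : ∀ᶠ r : ℝ in atTop, O + r • u ∈ Q) (hPv : ∀ᶠ r : ℝ in atTop, P + r • v ∈ Q) (X : E) :
    angle u v ≤ apertureAngle Q X := by
  refine le_of_tendsto (tendsto_angle_add_smul_add_smul hu hv (O - X) (P - X)) ?_
  filter_upwards [hOu, hPv, eventually_add_smul_ne_zero hu (O - X),
    eventually_add_smul_ne_zero hv (P - X)] with r hA hB hAX hBX
  rw [sub_add_eq_add_sub, sub_ne_zero] at hAX hBX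
  simpa only [sub_add_eq_add_sub] using angle_le_apertureAngle hA hB hAX hBX

/-- The wedge with apex `O` spanned by the directions `u` and `v`. These may be parallel, so that
rays, lines and points count as wedges. -/
def wedge (O u v : E) : Set E :=
  {P | ∃ s t : ℝ, 0 ≤ s ∧ 0 ≤ t ∧ P = O + s • u + t • v}

lemma add_smul_left_mem_wedge (O u v : E) {r : ℝ} (hr : 0 ≤ r) : O + r • u ∈ wedge O u v :=
  ⟨r, 0, hr, le_rfl, by simp⟩

lemma add_smul_right_mem_wedge (O u v : E) {r : ℝ} (hr : 0 ≤ r) : O + r • v ∈ wedge O u v :=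
  ⟨0, r, le_rfl, hr, by simp⟩

theorem aperture_angle_ge_wedge_angle_general (hu : u ≠ 0) (hv : v ≠ 0) (O : E) :
    (∀ X : E, angle u v ≤ apertureAngle (wedge O u v) X) ∧
    ∀ α : ℝ, α < angle u v → {X : E | apertureAngle (wedge O u v) X = α} = ∅ := by
  have angle_le (X : E) : angle u v ≤ apertureAngle (wedge O u v) X :=
    angle_le_apertureAngle_of_eventually_mem hu hv
      ((eventually_ge_atTop 0).mono fun _ => add_smul_left_mem_wedge O u v)
      ((eventually_ge_atTop 0).mono fun _ => add_smul_right_mem_wedge O u v) X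
  exact ⟨angle_le, fun α hα =>
    Set.eq_empty_of_forall_notMem fun X hX => (hα.trans_le (angle_le X)).ne' hX⟩

end ApertureAngle

theorem aperture_angle_ge_wedge_angle
    (u v : EuclideanSpace ℝ (Fin 2)) (hu : ‖u‖ = 1) (hv : ‖v‖ = 1)
    (ϑ : ℝ) (hϑ : ϑ = InnerProductGeometry.angle u v) (hϑ0 : 0 < ϑ) (hϑπ : ϑ < π)
    (O : EuclideanSpace ℝ (Fin 2))
    (W : Set (EuclideanSpace ℝ (Fin 2)))
    (hW : W = {P | ∃ s t : ℝ, 0 ≤ s ∧ 0 ≤ t ∧ P = O + s • u + t • v}) :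
    (∀ X : EuclideanSpace ℝ (Fin 2),
      ϑ ≤ sSup {θ : ℝ | ∃ A ∈ W, ∃ B ∈ W, A ≠ X ∧ B ≠ X ∧
          θ = InnerProductGeometry.angle (A - X) (B - X)}) ∧
    (∀ α : ℝ, α < ϑ →
      {X : EuclideanSpace ℝ (Fin 2) |
        sSup {θ : ℝ | ∃ A ∈ W, ∃ B ∈ W, A ≠ X ∧ B ≠ X ∧
          θ = InnerProductGeometry.angle (A - X) (B - X)} = α} = ∅) := by
  subst hϑ hW
  exact aperture_angle_ge_wedge_angle_general (ne_zero_of_norm_ne_zero (hu ▸ one_ne_zero))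
    (ne_zero_of_norm_ne_zero (hv ▸ one_ne_zero)) O
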